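/- Let k be a field and G a finite subgroup of GL_n(k) acting on S = k[x_1,…,x_n] by linear substitutions of the variables. Assume the invariant subalgebra S^G is a polynomial algebra, i.e., generated as a k-algebra by finitely many algebraically independent homogeneous elements of positive degree. Then there exists a polynomial p(t) ∈ ℤ[t] such that Hilb(S_G, t) = p(t)·Hilb(S^G, t) as an identity in ℤ[[t]]. -/

import Mathlib

open Finset Matrix MvPolynomial

/-- The action of a matrix `g` on `k[x_1,…,x_n]` by linear substitution of the variables:
`x_i ↦ Σ_j g_{ij} x_j`. -/
noncomputable def lsub {n : ℕ} {k : Type} [Field k] (g : Matrix (Fin n) (Fin n) k) :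
    MvPolynomial (Fin n) k →ₐ[k] MvPolynomial (Fin n) k :=
  MvPolynomial.aeval fun i => ∑ j, MvPolynomial.C (g i j) * MvPolynomial.X j

/-- The span of `{g(f) − f : g ∈ G, f ∈ S}`, whose quotient is the `G`-cofixed space `S_G`. -/
noncomputable def cofixSpan {n : ℕ} (k : Type) [Field k] (G : Subgroup (GL (Fin n) k)) :
    Submodule k (MvPolynomial (Fin n) k) :=
  Submodule.span k
    {h | ∃ g ∈ G, ∃ f : MvPolynomial (Fin n) k,
      h = lsub ((g : GL (Fin n) k) : Matrix (Fin n) (Fin n) k) f - f}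

/-- The submodule of `G`-invariant polynomials. -/
noncomputable def fixSub {n : ℕ} (k : Type) [Field k] (G : Subgroup (GL (Fin n) k)) :
    Submodule k (MvPolynomial (Fin n) k) :=
  ⨅ g ∈ G,
    LinearMap.ker
      ((lsub ((g : GL (Fin n) k) : Matrix (Fin n) (Fin n) k)).toLinearMap - LinearMap.id)

/-! Multiplication by an element of degree `d` on a finitely generated graded module has kernel and
cokernel annihilated by that element, and the alternating sum of Hilbert series along this exact
sequence gives `(1 - t^d) Hilb(M) = Hilb(coker) - t^d Hilb(ker)`. Induction on the number of
generators that do not annihilate `M` shows that a finitely generated graded module over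
`k[f_1,…,f_r]` becomes polynomial after multiplication by `∏ (1 - t^{d_i})`. For `k[f_1,…,f_r]`
itself the kernels vanish and the product is `1`. Finally `S` is integral over `S^G`, hence a
finite module, and so is its quotient `S_G`. -/

open DirectSum

section GradedSpace

variable {k M M' : Type*} [Field k] [AddCommGroup M] [Module k M] [AddCommGroup M'] [Module k M']

/-- The Hilbert series of the subspace `U` of a graded space `𝓜`: the `j`-th coefficient counts the
dimension of the elements of `U` of degree `j`. It is the Hilbert series of `U` as a graded space
when `U` is homogeneous. -/
noncomputable def hilbertSeries (𝓜 : ℕ → Submodule k M) (U : Submodule k M) : PowerSeries ℤ :=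
  PowerSeries.mk fun j => (Module.finrank k ↥(𝓜 j ⊓ U) : ℤ)

lemma coeff_hilbertSeries (𝓜 : ℕ → Submodule k M) (U : Submodule k M) (j : ℕ) :
    PowerSeries.coeff j (hilbertSeries 𝓜 U) = Module.finrank k ↥(𝓜 j ⊓ U) :=
  PowerSeries.coeff_mk _ _

lemma hilbertSeries_bot (𝓜 : ℕ → Submodule k M) : hilbertSeries 𝓜 ⊥ = 0 := by
  ext j
  simp [coeff_hilbertSeries]

lemma hilbertSeries_top_sub (𝓜 : ℕ → Submodule k M) [∀ j, FiniteDimensional k (𝓜 j)]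
    (U : Submodule k M) :
    hilbertSeries 𝓜 ⊤ - hilbertSeries 𝓜 U =
      PowerSeries.mk fun j => (Module.finrank k (𝓜 j ⧸ U.comap (𝓜 j).subtype) : ℤ) := by
  ext j
  have hcomap : Module.finrank k (U.comap (𝓜 j).subtype) = Module.finrank k ↥(𝓜 j ⊓ U) := by
    rw [← Submodule.map_comap_subtype]
    exact (Submodule.finrank_map_subtype_eq _ _).symm
  have hquot := (U.comap (𝓜 j).subtype).finrank_quotient_add_finrank
  rw [map_sub, coeff_hilbertSeries, coeff_hilbertSeries, PowerSeries.coeff_mk, inf_top_eq]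
  lia

lemma finrank_map_add_finrank_inf_ker (φ : M →ₗ[k] M') (V : Submodule k M)
    [FiniteDimensional k V] :
    Module.finrank k (V.map φ) + Module.finrank k ↥(V ⊓ LinearMap.ker φ) = Module.finrank k V := by
  have hker : Module.finrank k (LinearMap.ker (φ.domRestrict V)) =
      Module.finrank k ↥(V ⊓ LinearMap.ker φ) := by
    rw [LinearMap.ker_domRestrict, ← Submodule.map_comap_subtype]
    exact (Submodule.finrank_map_subtype_eq _ _).symm
  rw [← LinearMap.range_domRestrict, ← hker, LinearMap.finrank_range_add_finrank_ker]

lemma finrank_sup_map_add_finrank_inf_comap (φ : M →ₗ[k] M') (V : Submodule k M)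
    (W : Submodule k M') [FiniteDimensional k V] [FiniteDimensional k W] :
    Module.finrank k ↥(W ⊔ V.map φ) + Module.finrank k ↥(V ⊓ W.comap φ) =
      Module.finrank k W + Module.finrank k V := by
  have hV := finrank_map_add_finrank_inf_ker φ V
  have hVW := finrank_map_add_finrank_inf_ker φ (V ⊓ W.comap φ)
  have hsup := Submodule.finrank_sup_add_finrank_inf_eq W (V.map φ)
  rw [inf_assoc, inf_eq_right.2 (LinearMap.ker_le_comap φ),
    ← Submodule.map_inf_eq_map_inf_comap, inf_comm] at hVW
  lia

variable {𝓜 : ℕ → Submodule k M} [Decomposition 𝓜]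
  {𝓜' : ℕ → Submodule k M'} [Decomposition 𝓜']

lemma isHomogeneous_span {s : Set M} (hs : ∀ x ∈ s, ∀ j, (decompose 𝓜 x j : M) ∈ s) :
    (Submodule.span k s).IsHomogeneous 𝓜 := by
  intro j x hx
  induction hx using Submodule.span_induction with
  | mem x hx => exact Submodule.subset_span (hs x hx j)
  | zero => simp
  | add x y _ _ hx hy => simpa using add_mem hx hy
  | smul c x _ hx =>
    rw [decompose_smul]
    exact Submodule.smul_mem _ c hx

lemma inf_sup_eq_of_isHomogeneous {U V : Submodule k M} (hU : U.IsHomogeneous 𝓜)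
    (hV : V.IsHomogeneous 𝓜) (j : ℕ) : 𝓜 j ⊓ (U ⊔ V) = 𝓜 j ⊓ U ⊔ 𝓜 j ⊓ V := by
  refine le_antisymm ?_ le_inf_sup
  rintro x ⟨hxj, hx⟩
  obtain ⟨u, hu, v, hv, rfl⟩ := Submodule.mem_sup.1 hx
  rw [← decompose_of_mem_same 𝓜 hxj, decompose_add]
  exact Submodule.add_mem_sup ⟨SetLike.coe_mem _, hU j hu⟩ ⟨SetLike.coe_mem _, hV j hv⟩

section Semiring

variable {R : Type*} [Semiring R] [Module R M] [Module R M']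

lemma isHomogeneous_sup {U V : Submodule R M} (hU : U.IsHomogeneous 𝓜) (hV : V.IsHomogeneous 𝓜) :
    (U ⊔ V).IsHomogeneous 𝓜 := by
  intro j x hx
  obtain ⟨u, hu, v, hv, rfl⟩ := Submodule.mem_sup.1 hx
  rw [decompose_add]
  exact Submodule.add_mem_sup (hU j hu) (hV j hv)

lemma isHomogeneous_inf {U V : Submodule R M} (hU : U.IsHomogeneous 𝓜) (hV : V.IsHomogeneous 𝓜) :
    (U ⊓ V).IsHomogeneous 𝓜 :=
  fun j _ hx => ⟨hU j hx.1, hV j hx.2⟩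

variable {φ : M →ₗ[R] M'} {d : ℕ} (hφ : ∀ j, ∀ x ∈ 𝓜 j, φ x ∈ 𝓜' (j + d))
include hφ

lemma coe_decompose_map_add (x : M) (j : ℕ) :
    (decompose 𝓜' (φ x) (j + d) : M') = φ (decompose 𝓜 x j) := by
  induction x using Decomposition.inductionOn 𝓜 with
  | zero => simp
  | add x y hx hy => simp [hx, hy]
  | @homogeneous i x =>
    obtain rfl | hij := eq_or_ne i j
    · rw [decompose_of_mem_same 𝓜' (hφ i x x.2), decompose_of_mem_same 𝓜 x.2]
    · rw [decompose_of_mem_ne 𝓜' (hφ i x x.2) (by lia), decompose_of_mem_ne 𝓜 x.2 hij, map_zero]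

lemma coe_decompose_map_of_lt (x : M) {j : ℕ} (hj : j < d) :
    (decompose 𝓜' (φ x) j : M') = 0 := by
  induction x using Decomposition.inductionOn 𝓜 with
  | zero => simp
  | add x y hx hy => simp [hx, hy]
  | homogeneous x => exact decompose_of_mem_ne 𝓜' (hφ _ x x.2) (by lia)

lemma isHomogeneous_map {U : Submodule R M} (hU : U.IsHomogeneous 𝓜) :
    (U.map φ).IsHomogeneous 𝓜' := by
  rintro j _ ⟨x, hx, rfl⟩
  obtain hj | hj := lt_or_ge j d
  · rw [coe_decompose_map_of_lt hφ x hj]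
    exact zero_mem _
  · obtain ⟨i, rfl⟩ := Nat.exists_eq_add_of_le' hj
    rw [coe_decompose_map_add hφ]
    exact Submodule.mem_map_of_mem (hU i hx)

lemma isHomogeneous_comap {U : Submodule R M'} (hU : U.IsHomogeneous 𝓜') :
    (U.comap φ).IsHomogeneous 𝓜 := by
  intro j x hx
  rw [Submodule.mem_comap, ← coe_decompose_map_add hφ]
  exact hU (j + d) hx

end Semiring

section HomogeneousMap

variable {φ : M →ₗ[k] M'} {d : ℕ} (hφ : ∀ j, ∀ x ∈ 𝓜 j, φ x ∈ 𝓜' (j + d))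
include hφ

lemma inf_map_of_isHomogeneous {U : Submodule k M} (hU : U.IsHomogeneous 𝓜) (j : ℕ) :
    𝓜' (j + d) ⊓ U.map φ = (𝓜 j ⊓ U).map φ := by
  apply le_antisymm
  · rintro _ ⟨hxj, x, hx, rfl⟩
    rw [← decompose_of_mem_same 𝓜' hxj, coe_decompose_map_add hφ]
    exact Submodule.mem_map_of_mem ⟨SetLike.coe_mem _, hU j hx⟩
  · rintro _ ⟨x, ⟨hxj, hx⟩, rfl⟩
    exact ⟨hφ j x hxj, Submodule.mem_map_of_mem hx⟩

lemma inf_map_eq_bot_of_lt (U : Submodule k M) {j : ℕ} (hj : j < d) : 𝓜' j ⊓ U.map φ = ⊥ := by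
  rw [eq_bot_iff]
  rintro _ ⟨hxj, x, -, rfl⟩
  rw [Submodule.mem_bot, ← decompose_of_mem_same 𝓜' hxj, coe_decompose_map_of_lt hφ x hj]

variable [∀ j, FiniteDimensional k (𝓜 j)] [∀ j, FiniteDimensional k (𝓜' j)]

theorem hilbertSeries_sup_map {N : Submodule k M'} {L : Submodule k M}
    (hN : N.IsHomogeneous 𝓜') (hL : L.IsHomogeneous 𝓜) :
    hilbertSeries 𝓜' (N ⊔ L.map φ) = hilbertSeries 𝓜' N +
      PowerSeries.X ^ d * (hilbertSeries 𝓜 L - hilbertSeries 𝓜 (L ⊓ N.comap φ)) := by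
  ext j
  rw [map_add, PowerSeries.coeff_X_pow_mul', coeff_hilbertSeries, coeff_hilbertSeries,
    inf_sup_eq_of_isHomogeneous hN (isHomogeneous_map hφ hL)]
  split_ifs with hj
  · obtain ⟨i, rfl⟩ := Nat.exists_eq_add_of_le' hj
    have hcomap : 𝓜 i ⊓ (L ⊓ N.comap φ) = 𝓜 i ⊓ L ⊓ (𝓜' (i + d) ⊓ N).comap φ := by
      have hle : 𝓜 i ≤ (𝓜' (i + d)).comap φ := hφ i
      rw [Submodule.comap_inf, inf_inf_inf_comm, inf_eq_left.2 hle]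
    have hrank := finrank_sup_map_add_finrank_inf_comap φ (𝓜 i ⊓ L) (𝓜' (i + d) ⊓ N)
    rw [inf_map_of_isHomogeneous hφ hL, Nat.add_sub_cancel, map_sub, coeff_hilbertSeries,
      coeff_hilbertSeries, hcomap]
    lia
  · rw [inf_map_eq_bot_of_lt hφ L (not_le.1 hj), sup_bot_eq, add_zero]

theorem hilbertSeries_map_of_injective {L : Submodule k M} (hL : L.IsHomogeneous 𝓜)
    (hinj : Function.Injective φ) :
    hilbertSeries 𝓜' (L.map φ) = PowerSeries.X ^ d * hilbertSeries 𝓜 L := by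
  have hbot : (⊥ : Submodule k M').IsHomogeneous 𝓜' := by
    rintro j x rfl
    simp
  simpa [LinearMap.ker_eq_bot.2 hinj, hilbertSeries_bot] using hilbertSeries_sup_map hφ hbot hL

end HomogeneousMap

end GradedSpace

section HilbertSerre

lemma exists_polynomial_eq_of_forall_ge {p : PowerSeries ℤ} {m : ℕ}
    (hp : ∀ j ≥ m, PowerSeries.coeff j p = 0) : ∃ P : Polynomial ℤ, p = P := by
  refine ⟨PowerSeries.trunc m p, ?_⟩
  ext j
  rw [Polynomial.coeff_coe, PowerSeries.coeff_trunc]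
  split_ifs with hj
  · rfl
  · exact hp j (not_lt.1 hj)

variable {k R M ι : Type*} [Field k] [CommRing R] [Algebra k R] [AddCommGroup M] [Module k M]
  [Module R M] [IsScalarTower k R M]

lemma exists_forall_smul_sub_smul_mem {y : ι → R} (hgen : Algebra.adjoin k (Set.range y) = ⊤)
    {N L : Submodule R M} (hy : ∀ i, ∀ x ∈ L, y i • x ∈ N) (a : R) :
    ∃ c : k, ∀ x ∈ L, a • x - c • x ∈ N := by
  have ha : a ∈ Algebra.adjoin k (Set.range y) := hgen ▸ Algebra.mem_top
  induction ha using Algebra.adjoin_induction with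
  | mem a ha =>
    obtain ⟨i, rfl⟩ := ha
    exact ⟨0, by simpa using hy i⟩
  | algebraMap c => exact ⟨c, by simp⟩
  | add a b _ _ ha hb =>
    obtain ⟨c, hc⟩ := ha
    obtain ⟨c', hc'⟩ := hb
    refine ⟨c + c', fun x hx => ?_⟩
    convert add_mem (hc x hx) (hc' x hx) using 1
    module
  | mul a b _ _ ha hb =>
    obtain ⟨c, hc⟩ := ha
    obtain ⟨c', hc'⟩ := hb
    refine ⟨c * c', fun x hx => ?_⟩
    have hab := add_mem (N.smul_mem a (hc' x hx)) (N.smul_of_tower_mem c' (hc x hx))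
    convert hab using 1
    rw [smul_sub, smul_sub, mul_smul, smul_comm a c' x, mul_comm c, mul_smul, sub_add_sub_cancel]

variable (𝓜 : ℕ → Submodule k M) [Decomposition 𝓜]

lemma exists_forall_ge_decompose_eq_zero {s : Set M} (hs : s.Finite) :
    ∃ m, ∀ x ∈ s, ∀ j ≥ m, decompose 𝓜 x j = 0 := by
  classical
  obtain ⟨m, hm⟩ := (hs.toFinset.biUnion fun x => (decompose 𝓜 x).support).exists_nat_subset_range
  refine ⟨m, fun x hx j hj => ?_⟩
  by_contra hne
  have := hm (Finset.mem_biUnion.2 ⟨x, hs.mem_toFinset.2 hx, DFinsupp.mem_support_iff.2 hne⟩)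
  exact (Finset.mem_range.1 this).not_ge hj

lemma exists_forall_ge_inf_le {y : ι → R} (hgen : Algebra.adjoin k (Set.range y) = ⊤)
    {N L : Submodule R M} (hL : L.FG) (hN : N.IsHomogeneous 𝓜)
    (hy : ∀ i, ∀ x ∈ L, y i • x ∈ N) :
    ∃ m, ∀ j ≥ m, 𝓜 j ⊓ L.restrictScalars k ≤ N.restrictScalars k := by
  obtain ⟨s, hs, rfl⟩ := Submodule.fg_def.1 hL
  obtain ⟨m, hm⟩ := exists_forall_ge_decompose_eq_zero 𝓜 hs
  have hspan : ∀ x ∈ Submodule.span R s, ∀ j ≥ m, (decompose 𝓜 x j : M) ∈ N := by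
    intro x hx j hj
    induction hx using Submodule.span_induction with
    | mem x hx => simp [hm x hx j hj]
    | zero => simp
    | add x y _ _ hx hy => simpa using add_mem hx hy
    | smul a x hxL hx =>
      obtain ⟨c, hc⟩ := exists_forall_smul_sub_smul_mem hgen hy a
      have hac := add_mem (hN j (hc x hxL)) (N.smul_of_tower_mem c hx)
      rwa [decompose_sub, decompose_smul 𝓜 c x, DirectSum.sub_apply,
        AddSubgroupClass.coe_sub, DirectSum.smul_apply, Submodule.coe_smul, sub_add_cancel] at hac
  refine ⟨m, ?_⟩
  rintro j hj x ⟨hxj, hx⟩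
  rw [← decompose_of_mem_same 𝓜 hxj]
  exact hspan x hx j hj

variable {𝓜} [∀ j, FiniteDimensional k (𝓜 j)]

theorem exists_polynomial_prod_mul_hilbertSeries_sub [IsNoetherian R M] {y : ι → R} {d : ι → ℕ}
    (hgen : Algebra.adjoin k (Set.range y) = ⊤)
    (hdeg : ∀ i j, ∀ x ∈ 𝓜 j, y i • x ∈ 𝓜 (j + d i)) (J : Finset ι) {N L : Submodule R M}
    (hN : N.IsHomogeneous 𝓜) (hL : L.IsHomogeneous 𝓜) (hNL : N ≤ L)
    (hJ : ∀ i ∉ J, ∀ x ∈ L, y i • x ∈ N) :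
    ∃ P : Polynomial ℤ, (∏ i ∈ J, (1 - PowerSeries.X ^ d i)) *
      (hilbertSeries 𝓜 (L.restrictScalars k) - hilbertSeries 𝓜 (N.restrictScalars k)) = P := by
  classical
  induction J using Finset.induction_on generalizing N L with
  | empty =>
    obtain ⟨m, hm⟩ := exists_forall_ge_inf_le 𝓜 hgen (IsNoetherian.noetherian L) hN
      fun i => hJ i (Finset.notMem_empty i)
    rw [Finset.prod_empty, one_mul]
    refine exists_polynomial_eq_of_forall_ge (m := m) fun j hj => ?_
    have heq : 𝓜 j ⊓ L.restrictScalars k = 𝓜 j ⊓ N.restrictScalars k :=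
      le_antisymm (le_inf inf_le_left (hm j hj)) (inf_le_inf_left _ hNL)
    rw [map_sub, coeff_hilbertSeries, coeff_hilbertSeries, heq, sub_self]
  | insert a J haJ ih =>
    let φ : M →ₗ[R] M := LinearMap.lsmul R M (y a)
    have hφ : ∀ j, ∀ x ∈ 𝓜 j, φ x ∈ 𝓜 (j + d a) := hdeg a
    have hNφ : N ≤ N.comap φ := fun x hx => N.smul_mem _ hx
    have hLφ : L.map φ ≤ L := Submodule.map_le_iff_le_comap.2 fun x hx => L.smul_mem _ hx
    obtain ⟨P, hP⟩ := ih (N := N) (L := L ⊓ N.comap φ) hN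
      (isHomogeneous_inf hL (isHomogeneous_comap hφ hN)) (le_inf hNL hNφ) fun i hi x hx => by
        obtain rfl | hia := eq_or_ne i a
        · exact hx.2
        · exact hJ i (by simp [hi, hia]) x hx.1
    obtain ⟨Q, hQ⟩ := ih (N := N ⊔ L.map φ) (L := L)
      (isHomogeneous_sup hN (isHomogeneous_map hφ hL)) hL (sup_le hNL hLφ) fun i hi x hx => by
        obtain rfl | hia := eq_or_ne i a
        · exact Submodule.mem_sup_right (Submodule.mem_map_of_mem hx)
        · exact Submodule.mem_sup_left (hJ i (by simp [hi, hia]) x hx)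
    have hinf : (L ⊓ N.comap φ).restrictScalars k =
        L.restrictScalars k ⊓ (N.restrictScalars k).comap (φ.restrictScalars k) := rfl
    have hsup := hilbertSeries_sup_map (φ := φ.restrictScalars k) hφ (N := N.restrictScalars k)
      (L := L.restrictScalars k) hN hL
    rw [hinf] at hP
    rw [Submodule.restrictScalars_sup, Submodule.restrictScalars_map, hsup] at hQ
    refine ⟨Q - Polynomial.X ^ d a * P, ?_⟩
    rw [Polynomial.coe_sub, Polynomial.coe_mul, Polynomial.coe_pow, Polynomial.coe_X, ← hP, ← hQ,
      Finset.prod_insert haJ]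
    ring

end HilbertSerre

section WeightedPolynomialRing

variable {k σ : Type*} [Field k] {w : σ → ℕ}

attribute [local instance] MvPolynomial.weightedGradedAlgebra

lemma isHomogeneous_span_X_image (s : Set σ) :
    (Ideal.span (X '' s : Set (MvPolynomial σ k))).IsHomogeneous
      (weightedHomogeneousSubmodule k w) := by
  apply Ideal.homogeneous_span
  rintro _ ⟨i, -, rfl⟩
  exact ⟨w i, isWeightedHomogeneous_X k w i⟩

lemma X_mul_mem_span_X_image_iff {s : Set σ} {a : σ} (ha : a ∉ s) {p : MvPolynomial σ k} :
    X a * p ∈ Ideal.span (X '' s) ↔ p ∈ Ideal.span (X '' s) := by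
  refine ⟨fun hp => ?_, Ideal.mul_mem_left _ _⟩
  rw [mem_ideal_span_X_image] at hp ⊢
  intro m hm
  obtain ⟨i, his, hi⟩ := hp (Finsupp.single a 1 + m) (by simpa [support_X_mul] using hm)
  have hai : a ≠ i := fun h => ha (h ▸ his)
  exact ⟨i, his, by simpa [hai] using hi⟩

lemma finiteDimensional_weightedHomogeneousSubmodule [Finite σ] (hw : ∀ i, w i ≠ 0) (j : ℕ) :
    FiniteDimensional k (weightedHomogeneousSubmodule k w j) :=
  Module.Finite.iff_fg.2 (weightedHomogeneousSubmodule_fg k w hw j)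

lemma hilbertSeries_span_X_image_insert [Finite σ] (hw : ∀ i, w i ≠ 0) {s : Set σ} {a : σ}
    (ha : a ∉ s) :
    hilbertSeries (weightedHomogeneousSubmodule k w)
        ((Ideal.span (X '' insert a s)).restrictScalars k) =
      hilbertSeries (weightedHomogeneousSubmodule k w)
          ((Ideal.span (X '' s)).restrictScalars k) +
        PowerSeries.X ^ w a * (hilbertSeries (weightedHomogeneousSubmodule k w) ⊤ -
          hilbertSeries (weightedHomogeneousSubmodule k w)
            ((Ideal.span (X '' s)).restrictScalars k)) := by
  have := finiteDimensional_weightedHomogeneousSubmodule (k := k) hw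
  let φ : MvPolynomial σ k →ₗ[k] MvPolynomial σ k := LinearMap.mulLeft k (X a)
  have hφ : ∀ j, ∀ p ∈ weightedHomogeneousSubmodule k w j,
      φ p ∈ weightedHomogeneousSubmodule k w (j + w a) := fun j p hp => by
    rw [add_comm]
    exact (isWeightedHomogeneous_X k w a).mul hp
  have hcomap : ((Ideal.span (X '' s)).restrictScalars k).comap φ =
      (Ideal.span (X '' s)).restrictScalars k :=
    Submodule.ext fun p => X_mul_mem_span_X_image_iff ha
  have hinsert : (Ideal.span (X '' insert a s)).restrictScalars k =
      (Ideal.span (X '' s)).restrictScalars k ⊔ (⊤ : Submodule k (MvPolynomial σ k)).map φ := by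
    ext p
    rw [Set.image_insert_eq, Submodule.restrictScalars_mem, Ideal.mem_span_insert,
      Submodule.mem_sup]
    constructor
    · rintro ⟨q, z, hz, rfl⟩
      exact ⟨z, hz, X a * q, ⟨q, Submodule.mem_top, rfl⟩, by ring⟩
    · rintro ⟨z, hz, _, ⟨q, -, rfl⟩, rfl⟩
      exact ⟨q, z, hz, by simp only [φ, LinearMap.mulLeft_apply]; ring⟩
  have hsup := hilbertSeries_sup_map hφ (N := (Ideal.span (X '' s)).restrictScalars k) (L := ⊤)
    (isHomogeneous_span_X_image s) fun _ _ _ => Submodule.mem_top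
  rw [hinsert, hsup, hcomap, top_inf_eq]

lemma weightedHomogeneousSubmodule_le_span_range_X {j : ℕ} (hj : j ≠ 0) :
    weightedHomogeneousSubmodule k w j ≤ (Ideal.span (Set.range X)).restrictScalars k := by
  intro p hp
  rw [Submodule.restrictScalars_mem, ← Set.image_univ, mem_ideal_span_X_image]
  intro m hm
  have hm0 : m ≠ 0 := by
    rintro rfl
    exact hj (by simpa using (hp (mem_support_iff.1 hm)).symm)
  simpa using Finsupp.ne_iff.1 hm0

lemma weightedHomogeneousSubmodule_zero_inf_span_range_X (hw : ∀ i, w i ≠ 0) :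
    weightedHomogeneousSubmodule k w 0 ⊓ (Ideal.span (Set.range X)).restrictScalars k = ⊥ := by
  rw [eq_bot_iff]
  rintro p ⟨hp0, hp⟩
  rw [SetLike.mem_coe, Submodule.restrictScalars_mem, ← Set.image_univ,
    mem_ideal_span_X_image] at hp
  rw [Submodule.mem_bot, ← support_eq_empty, Finset.eq_empty_iff_forall_notMem]
  intro m hm
  obtain ⟨i, -, hi⟩ := hp m hm
  exact hi ((weightedDegree_eq_zero_iff (nonTorsionWeight_of hw)).1
    (hp0 (mem_support_iff.1 hm)) i)

lemma finrank_weightedHomogeneousSubmodule_zero (hw : ∀ i, w i ≠ 0) :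
    Module.finrank k (weightedHomogeneousSubmodule k w 0) = 1 := by
  have hspan : weightedHomogeneousSubmodule k w 0 = Submodule.span k {1} := by
    refine le_antisymm (fun p hp => ?_) ?_
    · have hC := weightedHomogeneousComponent_zero p hw
      rw [hp.weightedHomogeneousComponent_same] at hC
      exact Submodule.mem_span_singleton.2 ⟨coeff 0 p, by rw [hC]; simp [smul_eq_C_mul]⟩
    · rw [Submodule.span_singleton_le_iff_mem]
      exact isWeightedHomogeneous_one k w
  rw [hspan, finrank_span_singleton one_ne_zero]

lemma hilbertSeries_top_sub_span_range_X (hw : ∀ i, w i ≠ 0) :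
    hilbertSeries (weightedHomogeneousSubmodule k w) ⊤ -
      hilbertSeries (weightedHomogeneousSubmodule k w)
        ((Ideal.span (Set.range X)).restrictScalars k) = 1 := by
  ext j
  rw [map_sub, coeff_hilbertSeries, coeff_hilbertSeries, PowerSeries.coeff_one, inf_top_eq]
  obtain rfl | hj := eq_or_ne j 0
  · rw [weightedHomogeneousSubmodule_zero_inf_span_range_X hw,
      finrank_weightedHomogeneousSubmodule_zero hw, finrank_bot]
    simp
  · rw [inf_eq_left.2 (weightedHomogeneousSubmodule_le_span_range_X hj), sub_self, if_neg hj]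

theorem prod_mul_hilbertSeries_weightedHomogeneousSubmodule [Fintype σ] (hw : ∀ i, w i ≠ 0) :
    (∏ i, (1 - PowerSeries.X ^ w i)) * hilbertSeries (weightedHomogeneousSubmodule k w) ⊤ = 1 := by
  classical
  have hJ : ∀ J : Finset σ,
      (∏ i ∈ J, (1 - PowerSeries.X ^ w i)) * hilbertSeries (weightedHomogeneousSubmodule k w) ⊤ =
        hilbertSeries (weightedHomogeneousSubmodule k w) ⊤ -
          hilbertSeries (weightedHomogeneousSubmodule k w)
            ((Ideal.span (X '' (J : Set σ))).restrictScalars k) := by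
    intro J
    induction J using Finset.induction_on with
    | empty =>
      simp [hilbertSeries_bot]
    | insert a J ha ih =>
      rw [Finset.prod_insert ha, mul_assoc, ih, Finset.coe_insert,
        hilbertSeries_span_X_image_insert hw (Finset.mem_coe.not.2 ha)]
      ring
  rw [hJ, Finset.coe_univ, Set.image_univ, hilbertSeries_top_sub_span_range_X hw]

end WeightedPolynomialRing

section GradedAlgebra

variable {k A ι : Type*} [Field k] [CommRing A] [Algebra k A] (𝒜 : ℕ → Submodule k A)
  [GradedAlgebra 𝒜]

lemma aeval_mem_of_isWeightedHomogeneous {f : ι → A} {d : ι → ℕ} (hf : ∀ i, f i ∈ 𝒜 (d i))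
    {p : MvPolynomial ι k} {j : ℕ} (hp : p.IsWeightedHomogeneous d j) : aeval f p ∈ 𝒜 j := by
  induction hp using IsWeightedHomogeneous.induction_on with
  | zero => simp
  | add p q _ _ hp hq => simpa using add_mem hp hq
  | monomial m c hm =>
    rw [aeval_monomial, ← Algebra.smul_def, ← hm, Finsupp.weight_apply]
    exact Submodule.smul_mem _ c (SetLike.prod_pow_mem_graded 𝒜 _ _ _ fun i _ => hf i)

attribute [local instance] MvPolynomial.weightedGradedAlgebra

variable [∀ j, FiniteDimensional k (𝒜 j)]

theorem prod_mul_hilbertSeries_adjoin [Fintype ι] {f : ι → A} {d : ι → ℕ}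
    (hindep : AlgebraicIndependent k f) (hf : ∀ i, f i ∈ 𝒜 (d i)) (hd : ∀ i, d i ≠ 0) :
    (∏ i, (1 - PowerSeries.X ^ d i)) *
      hilbertSeries 𝒜 (Subalgebra.toSubmodule (Algebra.adjoin k (Set.range f))) = 1 := by
  have := finiteDimensional_weightedHomogeneousSubmodule (k := k) hd
  have hrange : Subalgebra.toSubmodule (Algebra.adjoin k (Set.range f)) =
      (⊤ : Submodule k (MvPolynomial ι k)).map (aeval f).toLinearMap := by
    rw [Algebra.adjoin_range_eq_range_aeval, Submodule.map_top]
    rfl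
  have hmap := hilbertSeries_map_of_injective (𝓜 := weightedHomogeneousSubmodule k d) (𝓜' := 𝒜)
    (φ := (aeval f).toLinearMap) (d := 0)
    (fun j p hp => aeval_mem_of_isWeightedHomogeneous 𝒜 hf hp) (L := ⊤)
    (fun _ _ _ => Submodule.mem_top) hindep
  rw [hrange, hmap, pow_zero, one_mul, prod_mul_hilbertSeries_weightedHomogeneousSubmodule hd]

theorem exists_polynomial_hilbertSeries_sub_eq_mul [Finite ι] {f : ι → A} {d : ι → ℕ}
    (hindep : AlgebraicIndependent k f) (hf : ∀ i, f i ∈ 𝒜 (d i)) (hd : ∀ i, d i ≠ 0)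
    [IsNoetherian (Algebra.adjoin k (Set.range f)) A]
    {N L : Submodule (Algebra.adjoin k (Set.range f)) A}
    (hN : N.IsHomogeneous 𝒜) (hL : L.IsHomogeneous 𝒜) (hNL : N ≤ L) :
    ∃ P : Polynomial ℤ,
      hilbertSeries 𝒜 (L.restrictScalars k) - hilbertSeries 𝒜 (N.restrictScalars k) =
        P * hilbertSeries 𝒜 (Subalgebra.toSubmodule (Algebra.adjoin k (Set.range f))) := by
  cases nonempty_fintype ι
  let y : ι → Algebra.adjoin k (Set.range f) :=
    fun i => ⟨f i, Algebra.subset_adjoin (Set.mem_range_self i)⟩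
  have hgen : Algebra.adjoin k (Set.range y) = ⊤ := by
    have hpreimage : Set.range y = Subtype.val ⁻¹' Set.range f := by
      ext x
      simp [y, Subtype.ext_iff]
    rw [hpreimage, Algebra.adjoin_adjoin_coe_preimage]
  have hdeg : ∀ i j, ∀ x ∈ 𝒜 j, y i • x ∈ 𝒜 (j + d i) := fun i j x hx =>
    add_comm (d i) j ▸ SetLike.mul_mem_graded (hf i) hx
  obtain ⟨P, hP⟩ := exists_polynomial_prod_mul_hilbertSeries_sub hgen hdeg Finset.univ hN hL hNL
    fun i hi => (hi (Finset.mem_univ i)).elim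
  have hadjoin := prod_mul_hilbertSeries_adjoin 𝒜 hindep hf hd
  refine ⟨P, ?_⟩
  rw [← hP]
  linear_combination -(hilbertSeries 𝒜 (L.restrictScalars k) -
    hilbertSeries 𝒜 (N.restrictScalars k)) * hadjoin

end GradedAlgebra

lemma isNoetherian_of_isIntegral {k A : Type*} [CommRing k] [IsNoetherianRing k] [CommRing A]
    [Algebra k A] [Algebra.FiniteType k A] {R : Subalgebra k A} (hR : R.FG)
    [Algebra.IsIntegral R A] : IsNoetherian R A := by
  have : IsNoetherianRing R := isNoetherianRing_of_fg hR
  have : Algebra.FiniteType R A := Algebra.FiniteType.of_restrictScalars_finiteType k _ _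
  have : Module.Finite R A := Algebra.IsIntegral.finite
  exact isNoetherian_of_isNoetherianRing_of_finite _ _

lemma finiteDimensional_homogeneousSubmodule {k σ : Type*} [Field k] [Finite σ] (j : ℕ) :
    FiniteDimensional k (homogeneousSubmodule σ k j) :=
  Module.Finite.iff_fg.2 (homogeneousSubmodule_fg σ k j)

section LinearSubstitution

variable {n : ℕ} {k : Type} [Field k]

lemma lsub_one : lsub (1 : Matrix (Fin n) (Fin n) k) = AlgHom.id k _ :=
  MvPolynomial.algHom_ext fun i => by simp [lsub, Matrix.one_apply]

lemma lsub_mul (g h : Matrix (Fin n) (Fin n) k) : lsub (g * h) = (lsub h).comp (lsub g) := by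
  ext1 i
  simp only [lsub, AlgHom.comp_apply, aeval_X, map_sum, map_mul, aeval_C,
    MvPolynomial.algebraMap_eq, Matrix.mul_apply, Finset.sum_mul, Finset.mul_sum, mul_assoc]
  rw [Finset.sum_comm]

lemma lsub_mem_homogeneousSubmodule (g : Matrix (Fin n) (Fin n) k) {j : ℕ}
    {p : MvPolynomial (Fin n) k} (hp : p ∈ homogeneousSubmodule (Fin n) k j) :
    lsub g p ∈ homogeneousSubmodule (Fin n) k j := by
  have hX : ∀ i, (∑ l, C (g i l) * X l : MvPolynomial (Fin n) k).IsHomogeneous 1 := fun i =>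
    IsHomogeneous.sum _ _ _ fun l _ => isHomogeneous_C_mul_X (g i l) l
  have haeval := IsHomogeneous.aeval hp _ hX
  rwa [one_mul] at haeval

variable (G : Subgroup (GL (Fin n) k))

/-- The left action of `G` on polynomials by linear substitution. The inverse makes it a left
action, as `lsub` reverses products; it does not change which polynomials are invariant. -/
noncomputable abbrev lsubAction : MulSemiringAction G (MvPolynomial (Fin n) k) where
  smul g p := lsub (g⁻¹ : GL (Fin n) k).1 p
  one_smul p := by
    change lsub ((1 : GL (Fin n) k)⁻¹).1 p = p
    rw [inv_one, Units.val_one, lsub_one, AlgHom.id_apply]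
  mul_smul g h p := by
    change lsub ((g * h : GL (Fin n) k)⁻¹).1 p =
      lsub (g⁻¹ : GL (Fin n) k).1 (lsub (h⁻¹ : GL (Fin n) k).1 p)
    rw [_root_.mul_inv_rev, Units.val_mul, lsub_mul, AlgHom.comp_apply]
  smul_zero _ := map_zero _
  smul_add _ := map_add _
  smul_one _ := map_one _
  smul_mul _ := map_mul _

variable {G} {R : Subalgebra k (MvPolynomial (Fin n) k)}

lemma isIntegral_of_forall_lsub_eq_imp_mem [Finite G]
    (hR : ∀ p, (∀ g ∈ G, lsub (g : GL (Fin n) k).1 p = p) → p ∈ R) :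
    Algebra.IsIntegral R (MvPolynomial (Fin n) k) := by
  let := lsubAction G
  have : Algebra.IsInvariant R (MvPolynomial (Fin n) k) G := by
    refine ⟨fun p hp => ⟨⟨p, hR p fun g hg => ?_⟩, rfl⟩⟩
    have hginv : lsub (g⁻¹⁻¹).1 p = p := hp ⟨g, hg⟩⁻¹
    rwa [inv_inv] at hginv
  exact Algebra.IsInvariant.isIntegral R _ G

lemma mul_mem_cofixSpan {a : MvPolynomial (Fin n) k}
    (ha : ∀ g ∈ G, lsub (g : GL (Fin n) k).1 a = a) {x : MvPolynomial (Fin n) k}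
    (hx : x ∈ cofixSpan k G) : a * x ∈ cofixSpan k G := by
  have hle : cofixSpan k G ≤ (cofixSpan k G).comap (LinearMap.mulLeft k a) := by
    refine Submodule.span_le.2 ?_
    rintro _ ⟨g, hg, p, rfl⟩
    exact Submodule.subset_span ⟨g, hg, a * p, by simp [ha g hg, mul_sub]⟩
  exact hle hx

/-- The subspace `cofixSpan k G` as a module over an algebra `R` of invariants: its quotient is the
cofixed space as an `R`-module. -/
noncomputable def cofixSubmodule (hR : ∀ p ∈ R, ∀ g ∈ G, lsub (g : GL (Fin n) k).1 p = p) :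
    Submodule R (MvPolynomial (Fin n) k) where
  toAddSubmonoid := (cofixSpan k G).toAddSubmonoid
  smul_mem' a _ hx := mul_mem_cofixSpan (hR a a.2) hx

attribute [local instance] MvPolynomial.gradedAlgebra

lemma isHomogeneous_cofixSpan :
    (cofixSpan k G).IsHomogeneous (homogeneousSubmodule (Fin n) k) := by
  apply isHomogeneous_span
  rintro _ ⟨g, hg, p, rfl⟩ j
  refine ⟨g, hg, DirectSum.decompose (homogeneousSubmodule (Fin n) k) p j, ?_⟩
  have hlsub := coe_decompose_map_add (𝓜 := homogeneousSubmodule (Fin n) k)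
    (𝓜' := homogeneousSubmodule (Fin n) k) (φ := (lsub g.1).toLinearMap) (d := 0)
    (fun j p hp => lsub_mem_homogeneousSubmodule g.1 hp) p j
  rw [decompose_sub, DirectSum.sub_apply, AddSubgroupClass.coe_sub]
  exact congrArg (· - _) hlsub

lemma fixSub_eq_toSubmodule
    (hR : ∀ p, (∀ g ∈ G, lsub (g : GL (Fin n) k).1 p = p) ↔ p ∈ R) :
    fixSub k G = Subalgebra.toSubmodule R := by
  ext p
  simp [fixSub, sub_eq_zero, ← hR p]

theorem exists_polynomial_hilbertSeries_sub_cofixSpan {ι : Type*} [Finite ι]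
    {f : ι → MvPolynomial (Fin n) k} {d : ι → ℕ} (hindep : AlgebraicIndependent k f)
    (hf : ∀ i, (f i).IsHomogeneous (d i)) (hd : ∀ i, d i ≠ 0)
    [IsNoetherian (Algebra.adjoin k (Set.range f)) (MvPolynomial (Fin n) k)]
    (hinv : ∀ p ∈ Algebra.adjoin k (Set.range f), ∀ g ∈ G, lsub (g : GL (Fin n) k).1 p = p) :
    ∃ P : Polynomial ℤ,
      hilbertSeries (homogeneousSubmodule (Fin n) k) ⊤ -
          hilbertSeries (homogeneousSubmodule (Fin n) k) (cofixSpan k G) =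
        P * hilbertSeries (homogeneousSubmodule (Fin n) k)
          (Subalgebra.toSubmodule (Algebra.adjoin k (Set.range f))) := by
  have := finiteDimensional_homogeneousSubmodule (k := k) (σ := Fin n)
  exact exists_polynomial_hilbertSeries_sub_eq_mul (homogeneousSubmodule (Fin n) k) hindep hf hd
    (N := cofixSubmodule hinv) (L := ⊤) isHomogeneous_cofixSpan
    (fun _ _ _ => Submodule.mem_top) le_top

end LinearSubstitution

/-- Let `G` be a finite subgroup of `GL_n(k)` acting on `S = k[x_1,…,x_n]` by linear
substitutions, and suppose the invariant ring `S^G` is a polynomial algebra, generated by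
finitely many algebraically independent homogeneous elements of positive degree.  Then
`Hilb(S_G,t) = p(t) · Hilb(S^G,t)` for some polynomial `p(t) ∈ ℤ[t]`. -/
theorem statement7 (n : ℕ) (k : Type) [Field k] (G : Subgroup (GL (Fin n) k)) [Finite G]
    (r : ℕ) (f : Fin r → MvPolynomial (Fin n) k) (d : Fin r → ℕ)
    (hindep : AlgebraicIndependent k f)
    (hhom : ∀ i, (f i).IsHomogeneous (d i))
    (hdpos : ∀ i, 0 < d i)
    (hgen : ∀ p : MvPolynomial (Fin n) k,
      (∀ g ∈ G, lsub ((g : GL (Fin n) k) : Matrix (Fin n) (Fin n) k) p = p) ↔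
        p ∈ Algebra.adjoin k (Set.range f)) :
    ∃ P : Polynomial ℤ,
      (PowerSeries.mk fun j =>
          (Module.finrank k
            (↥(MvPolynomial.homogeneousSubmodule (Fin n) k j) ⧸
              Submodule.comap (MvPolynomial.homogeneousSubmodule (Fin n) k j).subtype
                (cofixSpan k G)) : ℤ))
        = (PowerSeries.mk fun j => P.coeff j) *
            PowerSeries.mk fun j =>
              (Module.finrank k
                (MvPolynomial.homogeneousSubmodule (Fin n) k j ⊓ fixSub k G :
                  Submodule k (MvPolynomial (Fin n) k)) : ℤ) := by
  have := finiteDimensional_homogeneousSubmodule (σ := Fin n) (k := k)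
  have := isIntegral_of_forall_lsub_eq_imp_mem fun p => (hgen p).1
  have : IsNoetherian (Algebra.adjoin k (Set.range f)) (MvPolynomial (Fin n) k) :=
    isNoetherian_of_isIntegral (Subalgebra.fg_def.2 ⟨_, Set.finite_range f, rfl⟩)
  obtain ⟨P, hP⟩ := exists_polynomial_hilbertSeries_sub_cofixSpan hindep hhom
    (fun i => (hdpos i).ne') fun p => (hgen p).2
  rw [hilbertSeries_top_sub, ← fixSub_eq_toSubmodule hgen] at hP
  have hcoeff : (PowerSeries.mk fun j => P.coeff j) = (P : PowerSeries ℤ) := by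
    ext j
    simp
  exact ⟨P, hcoeff ▸ hP⟩
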